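/- arXiv:2601.12059 — 2 statements merged into one kernel-verified Lean document; each statement's English description precedes it below -/
import Mathlib

section
/- The following are equivalent: (1) R is almost coherent; (2) Hom_R(E, I) is almost flat for every almost absolutely pure R-module E and every injective R-module I; (3) for every injective cogenerator I and every almost absolutely pure R-module E, Hom_R(E, I) is almost flat; (4) Hom_R(Hom_R(F, I₁), I₂) is almost flat for every almost flat R-module F and all injective R-modules I₁, I₂; (5) for all injective cogenerators I₁, I₂ and every almost flat R-module F, Hom_R(Hom_R(F, I₁), I₂) is almost flat. -/
universe u

open CategoryTheory

/-- A module `F` is almost flat if `Tor₁ᴿ(N, F)` is almost zero for every module `N`. -/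
def IsAlmostFlat {R : Type u} [CommRing R] (m : Ideal R)
    (F : Type u) [AddCommGroup F] [Module R F] : Prop :=
  ∀ (N : Type u) [AddCommGroup N] [Module R N],
    ∀ s ∈ m, ∀ x : ((Tor (ModuleCat.{u} R) 1).obj (ModuleCat.of R N)).obj (ModuleCat.of R F),
      s • x = 0

/-- A module `E` is almost absolutely pure if `Ext¹ᴿ(N, E)` is almost zero for every
finitely presented module `N`. -/
def IsAlmostAbsolutelyPure {R : Type u} [CommRing R] (m : Ideal R)
    (E : Type u) [AddCommGroup E] [Module R E] : Prop :=
  ∀ (N : Type u) [AddCommGroup N] [Module R N], Module.FinitePresentation R N →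
    ∀ s ∈ m, ∀ x : ((Ext R (ModuleCat.{u} R) 1).obj
        (Opposite.op (ModuleCat.of R N))).obj (ModuleCat.of R E),
      s • x = 0

/-- An injective cogenerator: an injective module `E` such that any module with no
nonzero maps to `E` is trivial. -/
def IsInjectiveCogenerator (R : Type u) [CommRing R]
    (E : Type u) [AddCommGroup E] [Module R E] : Prop :=
  Module.Injective R E ∧
    ∀ (T : Type u) [AddCommGroup T] [Module R T],
      (∀ φ : T →ₗ[R] E, φ = 0) → Subsingleton T

/-- A module `M` is almost finitely generated (relative to the ideal `m`). -/
def IsAlmostFG {R : Type u} [CommRing R] (m : Ideal R)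
    (M : Type u) [AddCommGroup M] [Module R M] : Prop :=
  ∀ s ∈ m, ∃ (n : ℕ) (f : (Fin n → R) →ₗ[R] M), ∀ y : M, s • y ∈ LinearMap.range f

/-- A module `M` is almost finitely presented (relative to the ideal `m`). -/
def IsAlmostFP {R : Type u} [CommRing R] (m : Ideal R)
    (M : Type u) [AddCommGroup M] [Module R M] : Prop :=
  ∀ s ∈ m, ∀ t ∈ m, ∃ (n k : ℕ) (g : (Fin k → R) →ₗ[R] (Fin n → R))
    (f : (Fin n → R) →ₗ[R] M),
      f ∘ₗ g = 0 ∧ (∀ y : M, s • y ∈ LinearMap.range f) ∧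
        (∀ x ∈ LinearMap.ker f, t • x ∈ LinearMap.range g)

/-- `R` is almost coherent: every almost finitely generated ideal is
almost finitely presented. -/
def IsAlmostCoherent {R : Type u} [CommRing R] (m : Ideal R) : Prop :=
  ∀ I : Ideal R, IsAlmostFG m I → IsAlmostFP m I

/-!
Almost flatness of `F` and almost absolute purity of `E` can be rephrased without derived
functors, as a lifting property of relations with coefficients in `F` and an extension property
of maps into `E`, both up to a factor in `m`. Almost flatness then dualizes: `Hom(F, I)` is almost
absolutely pure for `F` almost flat and `I` injective, so `(2)` implies `(4)` and `(3)` implies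
`(5)`. Almost coherence amounts to the kernel of every `Rⁿ → Rᵖ` being almost finitely generated.

The bridge between the two is the evaluation `M ⊗ Hom(E, I) → Hom(Hom(M, E), I)`, bijective for
`M` finite free. If `ker f` is almost the image of `g : Rʲ → Rᵏ`, purity of `E` says that the maps
`Rᵏ → E` vanishing on the image of `g` almost factor through `f`; hence an element of
`Hom(Hom(Rᵏ, E), I)` that vanishes on maps factoring through `f` almost comes from
`Hom(Hom(Rʲ, E), I)`, which is `(1) ⇒ (2)`.

For `(5) ⇒ (1)`, let `K = ker f` and `E = Hom(R^(K), I)`. Injectivity of `I` provides one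
element of `Hom(Hom(Rⁿ, E), I)` that encodes the evaluations at all elements of `K` simultaneously.
It corresponds to a relation with coefficients in `Hom(E, I)`, and almost flatness expresses its
multiple by `s ∈ m` through finitely many elements of `K`. Testing against maps into the
cogenerator `I`, these elements span a submodule containing `s • K`.
-/

open scoped TensorProduct

section Factorization

variable {R : Type*} [CommRing R] {M N P : Type*} [AddCommGroup M] [Module R M]
  [AddCommGroup N] [Module R N] [AddCommGroup P] [Module R P]

lemma exists_comp_eq_of_surjective_of_ker_le {g : M →ₗ[R] N} (hg : Function.Surjective g)
    {f : M →ₗ[R] P} (h : LinearMap.ker g ≤ LinearMap.ker f) : ∃ f' : N →ₗ[R] P, f' ∘ₗ g = f :=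
  (LinearMap.exact_lcomp_of_exact_of_surjective P g.exact_subtype_ker_map hg f).1 <|
    LinearMap.ext fun x => h x.2

lemma exists_comp_rangeRestrict_eq_of_ker_le {g : M →ₗ[R] N} {f : M →ₗ[R] P}
    (h : LinearMap.ker g ≤ LinearMap.ker f) :
    ∃ f' : LinearMap.range g →ₗ[R] P, f' ∘ₗ g.rangeRestrict = f :=
  exists_comp_eq_of_surjective_of_ker_le g.surjective_rangeRestrict (g.ker_rangeRestrict.trans_le h)

lemma exists_comp_eq_of_injective_of_ker_le [Small.{u} R] {I : Type u} [AddCommGroup I]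
    [Module R I] (hI : Module.Injective R I) {g : M →ₗ[R] N} {f : M →ₗ[R] I}
    (h : LinearMap.ker g ≤ LinearMap.ker f) : ∃ f' : N →ₗ[R] I, f' ∘ₗ g = f := by
  obtain ⟨f₀, hf₀⟩ := exists_comp_rangeRestrict_eq_of_ker_le h
  obtain ⟨f', hf'⟩ := Module.Injective.extension_property R I _ _ (LinearMap.range g).subtype
    (Submodule.subtype_injective _) f₀
  exact ⟨f', by rw [← hf₀, ← hf']; rfl⟩

end Factorization

section DerivedFunctors

variable {R : Type u} [CommRing R]

lemma mem_annihilator_shortComplex_homology_iff (S : ShortComplex (ModuleCat.{u} R)) (s : R) :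
    s ∈ Module.annihilator R S.homology ↔ ∀ y : S.X₂, S.g y = 0 → ∃ z, S.f z = s • y := by
  rw [S.moduleCatHomologyIso.toLinearEquiv.annihilator_eq]
  change s ∈ Module.annihilator R (_ ⧸ LinearMap.range S.moduleCatToCycles) ↔ _
  rw [Submodule.annihilator_quotient, Submodule.mem_colon]
  exact ⟨fun h y hy => (h ⟨y, hy⟩ trivial).imp fun z hz => congrArg Subtype.val hz,
    fun h y _ => (h y.1 y.2).imp fun z hz => Subtype.ext hz⟩

lemma mem_annihilator_homology_iff {ι : Type*} {c : ComplexShape ι}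
    (K : HomologicalComplex (ModuleCat.{u} R) c) {i j k : ι} (hi : c.prev j = i)
    (hk : c.next j = k) (s : R) :
    s ∈ Module.annihilator R (K.homology j) ↔
      ∀ y : K.X j, K.d j k y = 0 → ∃ z, K.d i j z = s • y := by
  rw [(K.homologyIsoSc' i j k hi hk).toLinearEquiv.annihilator_eq,
    mem_annihilator_shortComplex_homology_iff]
  rfl

variable {F : Type u} [AddCommGroup F] [Module R F]

/-- The augmentation `P₀ → F` of a projective resolution `P` of `F`, as a linear map. Its kernel is
the first syzygy, in terms of which `Tor₁` and `Ext¹` are described. -/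
noncomputable def augmentation (P : ProjectiveResolution (ModuleCat.of R F)) :
    P.complex.X 0 →ₗ[R] F :=
  (P.π.f 0).hom

variable (P : ProjectiveResolution (ModuleCat.of R F))

lemma augmentation_surjective : Function.Surjective (augmentation P) :=
  (ModuleCat.epi_iff_surjective (P.π.f 0)).1 inferInstance

lemma exact_d_augmentation : Function.Exact (P.complex.d 1 0).hom (augmentation P) :=
  (ShortComplex.ShortExact.moduleCat_exact_iff_function_exact _).1 P.exact₀

lemma exact_d_d : Function.Exact (P.complex.d 2 1).hom (P.complex.d 1 0).hom :=
  (ShortComplex.ShortExact.moduleCat_exact_iff_function_exact _).1 (P.exact_succ 0)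

instance projective_complex_X_zero : Module.Projective R (P.complex.X 0) :=
  (IsProjective.iff_projective _).2 (P.projective 0)

/-- The differential `P₁ → P₀` of a projective resolution, with codomain restricted to the first
syzygy, which it covers. -/
noncomputable def toSyzygy : P.complex.X 1 →ₗ[R] LinearMap.ker (augmentation P) :=
  (P.complex.d 1 0).hom.codRestrict _ (exact_d_augmentation P).apply_apply_eq_zero

lemma subtype_comp_toSyzygy :
    (LinearMap.ker (augmentation P)).subtype ∘ₗ toSyzygy P = (P.complex.d 1 0).hom :=
  rfl

lemma toSyzygy_surjective : Function.Surjective (toSyzygy P) := fun y =>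
  ((exact_d_augmentation P y.1).1 y.2).imp fun _ hx => Subtype.ext hx

lemma exact_d_toSyzygy : Function.Exact (P.complex.d 2 1).hom (toSyzygy P) := fun x =>
  Subtype.ext_iff.trans (exact_d_d P x)

lemma mem_annihilator_tor_one_iff (N : Type u) [AddCommGroup N] [Module R N] (s : R) :
    s ∈ Module.annihilator R
        (((Tor (ModuleCat.{u} R) 1).obj (ModuleCat.of R N)).obj (ModuleCat.of R F)) ↔
      ∀ y : N ⊗[R] LinearMap.ker (augmentation P),
        (LinearMap.ker (augmentation P)).subtype.lTensor N y = 0 → s • y = 0 := by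
  have exact_tensor := lTensor_exact N (exact_d_toSyzygy P) (toSyzygy_surjective P)
  have d_eq (x) : (P.complex.d 1 0).hom.lTensor N x =
      (LinearMap.ker (augmentation P)).subtype.lTensor N ((toSyzygy P).lTensor N x) := by
    rw [← subtype_comp_toSyzygy, LinearMap.lTensor_comp_apply]
  calc
    _ ↔ ∀ x : N ⊗[R] P.complex.X 1, (P.complex.d 1 0).hom.lTensor N x = 0 →
          ∃ z, (P.complex.d 2 1).hom.lTensor N z = s • x :=
      (SetLike.ext_iff.1 (P.isoLeftDerivedObj ((MonoidalCategory.tensoringLeft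
        (ModuleCat.{u} R)).obj (ModuleCat.of R N)) 1).toLinearEquiv.annihilator_eq s).trans <|
      mem_annihilator_homology_iff _ (i := 2) (k := 0) (by simp) (by simp) s
    _ ↔ ∀ x, (LinearMap.ker (augmentation P)).subtype.lTensor N ((toSyzygy P).lTensor N x) = 0 →
          s • (toSyzygy P).lTensor N x = 0 := by
      refine forall_congr' fun x => ?_
      rw [d_eq, ← map_smul, exact_tensor (s • x), Set.mem_range]
    _ ↔ _ := ((LinearMap.lTensor_surjective N (toSyzygy_surjective P)).forall
      (p := fun y => (LinearMap.ker (augmentation P)).subtype.lTensor N y = 0 → s • y = 0)).symm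

lemma mem_annihilator_ext_one_iff (E : Type u) [AddCommGroup E] [Module R E] (s : R) :
    s ∈ Module.annihilator R (((Ext R (ModuleCat.{u} R) 1).obj
        (Opposite.op (ModuleCat.of R F))).obj (ModuleCat.of R E)) ↔
      ∀ e : LinearMap.ker (augmentation P) →ₗ[R] E, ∃ e' : P.complex.X 0 →ₗ[R] E,
        e' ∘ₗ (LinearMap.ker (augmentation P)).subtype = s • e := by
  have cocycles : s ∈ Module.annihilator R (((Ext R (ModuleCat.{u} R) 1).obj
        (Opposite.op (ModuleCat.of R F))).obj (ModuleCat.of R E)) ↔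
      ∀ q : P.complex.X 1 →ₗ[R] E, q ∘ₗ (P.complex.d 2 1).hom = 0 →
        ∃ e' : P.complex.X 0 →ₗ[R] E, e' ∘ₗ (P.complex.d 1 0).hom = s • q := by
    rw [(P.isoExt 1 (ModuleCat.of R E)).toLinearEquiv.annihilator_eq,
      mem_annihilator_homology_iff _ (i := 0) (k := 2) (by simp) (by simp)]
    constructor
    · intro h q hq
      obtain ⟨e', he'⟩ := h (ModuleCat.ofHom q) (ModuleCat.hom_ext hq)
      exact ⟨e'.hom, congrArg ModuleCat.Hom.hom he'⟩
    · intro h q hq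
      obtain ⟨e', he'⟩ := h q.hom (congrArg ModuleCat.Hom.hom hq)
      exact ⟨ModuleCat.ofHom e', ModuleCat.hom_ext he'⟩
  rw [cocycles]
  have exact_hom := LinearMap.exact_lcomp_of_exact_of_surjective E (exact_d_toSyzygy P)
    (toSyzygy_surjective P)
  constructor
  · intro h e
    obtain ⟨e', he'⟩ := h (e ∘ₗ toSyzygy P) ((exact_hom _).2 ⟨e, rfl⟩)
    exact ⟨e', LinearMap.cancel_right (toSyzygy_surjective P) |>.1 he'⟩
  · intro h q hq
    obtain ⟨e, rfl⟩ := (exact_hom q).1 hq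
    obtain ⟨e', he'⟩ := h e
    exact ⟨e', congrArg (· ∘ₗ toSyzygy P) he'⟩

end DerivedFunctors

section TensorProduct

variable {R : Type*} [CommRing R] {M M' N N' : Type*} [AddCommGroup M] [Module R M]
  [AddCommGroup M'] [Module R M'] [AddCommGroup N] [Module R N] [AddCommGroup N'] [Module R N']

lemma lTensor_rTensor_comm (f : M →ₗ[R] M') (g : N →ₗ[R] N') (x : M ⊗[R] N) :
    g.lTensor M' (f.rTensor N x) = f.rTensor N' (g.lTensor M x) := by
  rw [← LinearMap.comp_apply, ← LinearMap.comp_apply, LinearMap.lTensor_comp_rTensor,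
    LinearMap.rTensor_comp_lTensor]

lemma exists_fin_rTensor_eq (x : M ⊗[R] N) :
    ∃ (k : ℕ) (f : (Fin k → R) →ₗ[R] M) (y : (Fin k → R) ⊗[R] N), f.rTensor N y = x := by
  obtain ⟨k, a, b, rfl⟩ := TensorProduct.exists_sum_tmul_eq x
  exact ⟨k, Fintype.linearCombination R a, ∑ i, Pi.single i 1 ⊗ₜ b i, by simp⟩

lemma exists_fin_rTensor_eq_of_rTensor_eq_zero [Module.Flat R N] {g : M →ₗ[R] M'} {x : M ⊗[R] N}
    (hx : g.rTensor N x = 0) :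
    ∃ (k : ℕ) (f : (Fin k → R) →ₗ[R] M) (y : (Fin k → R) ⊗[R] N),
      g ∘ₗ f = 0 ∧ f.rTensor N y = x := by
  obtain ⟨z, rfl⟩ := (Module.Flat.rTensor_exact N g.exact_subtype_ker_map x).1 hx
  obtain ⟨k, f, y, rfl⟩ := exists_fin_rTensor_eq z
  refine ⟨k, (LinearMap.ker g).subtype ∘ₗ f, y, ?_, LinearMap.rTensor_comp_apply ..⟩
  rw [← LinearMap.comp_assoc, LinearMap.comp_ker_subtype, LinearMap.zero_comp]

end TensorProduct

section AlmostFlat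

variable {R : Type u} [CommRing R] {m : Ideal R} {F : Type u} [AddCommGroup F] [Module R F] {s : R}

lemma IsAlmostFlat.smul_eq_zero_of_rTensor_subtype_eq_zero (hF : IsAlmostFlat m F) (hs : s ∈ m)
    {M : Type u} [AddCommGroup M] [Module R M] {A : Submodule R M} {x : A ⊗[R] F}
    (hx : A.subtype.rTensor F x = 0) : s • x = 0 := by
  let P := projectiveResolution (ModuleCat.of R F)
  let p := augmentation P
  have hp := augmentation_surjective P
  have exact_p := p.exact_subtype_ker_map
  have exact_mkQ := LinearMap.exact_subtype_mkQ A
  have tor_eq_zero := (mem_annihilator_tor_one_iff P (M ⧸ A) s).1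
    (Module.mem_annihilator.2 (hF (M ⧸ A) s hs))
  obtain ⟨x, rfl⟩ := p.lTensor_surjective A hp x
  obtain ⟨w, hw⟩ := (lTensor_exact M exact_p hp (A.subtype.rTensor _ x)).1 <| by
    rw [lTensor_rTensor_comm, hx]
  have smul_w : A.mkQ.rTensor (LinearMap.ker p) (s • w) = 0 := by
    rw [map_smul]
    refine tor_eq_zero _ ?_
    rw [lTensor_rTensor_comm, hw]
    exact (rTensor_exact _ exact_mkQ A.mkQ_surjective).apply_apply_eq_zero x
  obtain ⟨v, hv⟩ := (rTensor_exact _ exact_mkQ A.mkQ_surjective (s • w)).1 smul_w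
  have hv' : (LinearMap.ker p).subtype.lTensor A v = s • x := by
    refine Module.Flat.rTensor_preserves_injective_linearMap A.subtype A.subtype_injective ?_
    rw [← lTensor_rTensor_comm, hv, map_smul, hw, map_smul]
  rw [← map_smul, ← hv']
  exact (lTensor_exact A exact_p hp).apply_apply_eq_zero v

lemma IsAlmostFlat.smul_mem_range_rTensor_ker (hF : IsAlmostFlat m F) (hs : s ∈ m)
    {M N : Type u} [AddCommGroup M] [Module R M] [AddCommGroup N] [Module R N] {f : M →ₗ[R] N}
    {x : M ⊗[R] F} (hx : f.rTensor F x = 0) :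
    s • x ∈ LinearMap.range ((LinearMap.ker f).subtype.rTensor F) := by
  have exact_f : Function.Exact (LinearMap.ker f).subtype f.rangeRestrict := fun y => by
    rw [← LinearMap.mem_ker, LinearMap.ker_rangeRestrict]
    exact f.exact_subtype_ker_map y
  refine (rTensor_exact F exact_f f.surjective_rangeRestrict (s • x)).1 ?_
  rw [map_smul]
  refine hF.smul_eq_zero_of_rTensor_subtype_eq_zero hs ?_
  rwa [← LinearMap.rTensor_comp_apply]

lemma isAlmostFlat_of_forall_smul_mem_range_rTensor_ker
    (h : ∀ (k l : ℕ) (f : (Fin k → R) →ₗ[R] (Fin l → R)) (x : (Fin k → R) ⊗[R] F),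
      f.rTensor F x = 0 → ∀ s ∈ m, s • x ∈ LinearMap.range ((LinearMap.ker f).subtype.rTensor F)) :
    IsAlmostFlat m F := by
  intro N _ _ s hs
  let P := projectiveResolution (ModuleCat.of R F)
  let p := augmentation P
  have hp := augmentation_surjective P
  have exact_p := p.exact_subtype_ker_map
  rw [← Module.mem_annihilator, mem_annihilator_tor_one_iff P]
  intro w hw
  obtain ⟨l, n, w, rfl⟩ := exists_fin_rTensor_eq w
  rw [lTensor_rTensor_comm] at hw
  obtain ⟨k, f, y, hnf, hy⟩ := exists_fin_rTensor_eq_of_rTensor_eq_zero hw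
  obtain ⟨z, hz⟩ := h k l f (p.lTensor _ y)
    (by rw [← lTensor_rTensor_comm, hy]
        exact (lTensor_exact _ exact_p hp).apply_apply_eq_zero w) s hs
  obtain ⟨z, rfl⟩ := p.lTensor_surjective _ hp z
  obtain ⟨r, hr⟩ := (lTensor_exact _ exact_p hp
    (s • y - (LinearMap.ker f).subtype.rTensor _ z)).1
    (by rw [map_sub, map_smul, lTensor_rTensor_comm, hz, sub_self])
  have hr' : f.rTensor _ r = s • w := by
    refine Module.Flat.lTensor_preserves_injective_linearMap (LinearMap.ker p).subtype
      (Submodule.subtype_injective _) ?_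
    rw [lTensor_rTensor_comm, hr, map_sub, map_smul, hy, ← LinearMap.rTensor_comp_apply,
      f.comp_ker_subtype, LinearMap.rTensor_zero, LinearMap.zero_apply, sub_zero, map_smul]
  rw [← map_smul, ← hr', ← LinearMap.rTensor_comp_apply, hnf, LinearMap.rTensor_zero,
    LinearMap.zero_apply]

lemma isAlmostFlat_of_flat [Module.Flat R F] : IsAlmostFlat m F :=
  isAlmostFlat_of_forall_smul_mem_range_rTensor_ker fun _ _ f x hx s _ =>
    Submodule.smul_mem _ s <| (Module.Flat.rTensor_exact F f.exact_subtype_ker_map x).1 hx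

end AlmostFlat

section AlmostAbsolutelyPure

variable {R : Type u} [CommRing R] {m : Ideal R} {E : Type u} [AddCommGroup E] [Module R E]

lemma IsAlmostAbsolutelyPure.exists_comp_subtype_eq_smul (hE : IsAlmostAbsolutelyPure m E)
    {Q : Type u} [AddCommGroup Q] [Module R Q] {A : Submodule R Q}
    (hA : Module.FinitePresentation R (Q ⧸ A)) {s : R} (hs : s ∈ m) (e : A →ₗ[R] E) :
    ∃ e' : Q →ₗ[R] E, e' ∘ₗ A.subtype = s • e := by
  -- `Q` is the pushout of `A` and `P₀` along the first syzygy of `Q ⧸ A`.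
  let P := projectiveResolution (ModuleCat.of R (Q ⧸ A))
  obtain ⟨l, hl⟩ := Module.projective_lifting_property A.mkQ (augmentation P) A.mkQ_surjective
  have mkQ_l (x) : A.mkQ (l x) = augmentation P x := LinearMap.congr_fun hl x
  have l_mem (x) : l x ∈ A ↔ augmentation P x = 0 := by
    rw [← mkQ_l, A.mkQ_apply, Submodule.Quotient.mk_eq_zero]
  obtain ⟨h, hh⟩ := (mem_annihilator_ext_one_iff P E s).1 (Module.mem_annihilator.2 (hE _ hA s hs))
    (e ∘ₗ l.restrict fun x hx => (l_mem x).2 hx)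
  have coprod_surjective : Function.Surjective (A.subtype.coprod l) := fun q => by
    obtain ⟨x, hx⟩ := augmentation_surjective P (A.mkQ q)
    have hq : q - l x ∈ A := (Submodule.Quotient.eq A).1 (hx.symm.trans (mkQ_l x).symm)
    exact ⟨(⟨_, hq⟩, x), by simp⟩
  have ker_le : LinearMap.ker (A.subtype.coprod l) ≤ LinearMap.ker ((s • e).coprod h) := by
    rintro ⟨a, x⟩ hax
    replace hax : (a : Q) + l x = 0 := hax
    have hx : l x ∈ A := eq_neg_of_add_eq_zero_right hax ▸ A.neg_mem a.2
    have hhx : h x = s • e ⟨l x, hx⟩ := LinearMap.congr_fun hh ⟨x, (l_mem x).1 hx⟩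
    change s • e a + h x = 0
    rw [hhx, ← smul_add, ← map_add, show a + ⟨l x, hx⟩ = 0 from Subtype.ext hax, map_zero,
      smul_zero]
  obtain ⟨e', he'⟩ := exists_comp_eq_of_surjective_of_ker_le coprod_surjective ker_le
  refine ⟨e', LinearMap.ext fun a => ?_⟩
  simpa using LinearMap.congr_fun he' (a, 0)

lemma IsAlmostAbsolutelyPure.exists_comp_eq_smul (hE : IsAlmostAbsolutelyPure m E) {M Q : Type u}
    [AddCommGroup M] [Module R M] [Module.Finite R M] [AddCommGroup Q] [Module R Q]
    [Module.FinitePresentation R Q] {f : M →ₗ[R] Q} {e : M →ₗ[R] E}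
    (h : LinearMap.ker f ≤ LinearMap.ker e) {s : R} (hs : s ∈ m) :
    ∃ e' : Q →ₗ[R] E, e' ∘ₗ f = s • e := by
  obtain ⟨e₀, rfl⟩ := exists_comp_rangeRestrict_eq_of_ker_le h
  have hQ : Module.FinitePresentation R (Q ⧸ LinearMap.range f) :=
    Module.finitePresentation_of_surjective _ (Submodule.mkQ_surjective _) <| by
      rw [Submodule.ker_mkQ]
      exact Module.Finite.iff_fg.1 inferInstance
  obtain ⟨e', he'⟩ := hE.exists_comp_subtype_eq_smul hQ hs e₀
  exact ⟨e', congrArg (· ∘ₗ f.rangeRestrict) he'⟩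

lemma IsAlmostFlat.isAlmostAbsolutelyPure_hom {F I : Type u} [AddCommGroup F] [Module R F]
    [AddCommGroup I] [Module R I] (hF : IsAlmostFlat m F) (hI : Module.Injective R I) :
    IsAlmostAbsolutelyPure m (F →ₗ[R] I) := by
  intro N _ _ _ s hs
  let P := projectiveResolution (ModuleCat.of R N)
  let K := LinearMap.ker (augmentation P)
  rw [← Module.mem_annihilator, mem_annihilator_ext_one_iff P]
  intro e
  have ker_le : LinearMap.ker (K.subtype.rTensor F) ≤
      LinearMap.ker (s • TensorProduct.lift e) := fun x hx => by
    rw [LinearMap.mem_ker, LinearMap.smul_apply, ← map_smul,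
      hF.smul_eq_zero_of_rTensor_subtype_eq_zero hs hx, map_zero]
  obtain ⟨φ, hφ⟩ := exists_comp_eq_of_injective_of_ker_le hI ker_le
  refine ⟨TensorProduct.curry φ, ?_⟩
  ext k x
  exact LinearMap.congr_fun hφ (k ⊗ₜ x)

end AlmostAbsolutelyPure

section TensorHom

variable {R : Type*} [CommRing R] {M N E I : Type*} [AddCommGroup M] [Module R M]
  [AddCommGroup N] [Module R N] [AddCommGroup E] [Module R E] [AddCommGroup I] [Module R I]

variable (R M E I) in
/-- The evaluation map `M ⊗ Hom(E, I) → Hom(Hom(M, E), I)`, `x ⊗ φ ↦ (e ↦ φ (e x))`. It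
represents relations with coefficients in `Hom(E, I)` by functionals on `Hom(M, E)`. -/
noncomputable def tensorHomEval : M ⊗[R] (E →ₗ[R] I) →ₗ[R] (M →ₗ[R] E) →ₗ[R] I :=
  TensorProduct.lift ((LinearMap.llcomp R (M →ₗ[R] E) E I).flip ∘ₗ LinearMap.applyₗ)

@[simp]
lemma tensorHomEval_tmul (x : M) (φ : E →ₗ[R] I) (e : M →ₗ[R] E) :
    tensorHomEval R M E I (x ⊗ₜ φ) e = φ (e x) :=
  rfl

lemma tensorHomEval_rTensor (f : M →ₗ[R] N) (x : M ⊗[R] (E →ₗ[R] I)) (e : N →ₗ[R] E) :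
    tensorHomEval R N E I (f.rTensor _ x) e = tensorHomEval R M E I x (e ∘ₗ f) := by
  induction x with
  | zero => simp
  | tmul x φ => simp
  | add x y hx hy => simp [hx, hy]

lemma tensorHomEval_bijective [Module.Finite R M] [Module.Free R M] :
    Function.Bijective (tensorHomEval R M E I) := by
  let b := Module.Free.chooseBasis R M
  let c (i) : E →ₗ[R] M →ₗ[R] E := LinearMap.smulRightₗ (b.coord i)
  let inv : ((M →ₗ[R] E) →ₗ[R] I) →ₗ[R] M ⊗[R] (E →ₗ[R] I) :=
    ∑ i, TensorProduct.mk R M (E →ₗ[R] I) (b i) ∘ₗ LinearMap.lcomp R I (c i)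
  refine Function.bijective_iff_has_inverse.2 ⟨inv, fun x => ?_, fun ψ => ?_⟩
  · induction x with
    | zero => simp
    | tmul x φ =>
      have eval_c (i) : tensorHomEval R M E I (x ⊗ₜ φ) ∘ₗ c i = b.repr x i • φ :=
        LinearMap.ext fun y => by simp [c]
      calc
        inv (tensorHomEval R M E I (x ⊗ₜ φ)) = ∑ i, b i ⊗ₜ (b.repr x i • φ) := by
          simp [inv, LinearMap.lcomp_apply', eval_c]
        _ = x ⊗ₜ φ := by
          simp only [TensorProduct.tmul_smul, TensorProduct.smul_tmul', ← TensorProduct.sum_tmul,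
            b.sum_repr]
    | add x y hx hy => rw [map_add, map_add, hx, hy]
  · ext e
    have sum_c : ∑ i, c i (e (b i)) = e := b.ext fun j => by
      simp [c, Finsupp.single_apply, ite_smul]
    calc
      tensorHomEval R M E I (inv ψ) e = ψ (∑ i, c i (e (b i))) := by simp [inv]
      _ = ψ e := by rw [sum_c]

end TensorHom

lemma smul_mem_of_forall_mul_smul_mem {R : Type*} [CommRing R] {m : Ideal R} (hm : m * m = m)
    {M : Type*} [AddCommGroup M] [Module R M] {N : Submodule R M} {x : M}
    (h : ∀ s ∈ m, ∀ t ∈ m, (s * t) • x ∈ N) {s : R} (hs : s ∈ m) : s • x ∈ N := by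
  rw [← hm] at hs
  refine Submodule.mul_induction_on hs h fun a b ha hb => ?_
  rw [add_smul]
  exact N.add_mem ha hb

section AlmostFinite

variable {R : Type u} [CommRing R] {m : Ideal R} {M : Type u} [AddCommGroup M] [Module R M]

lemma isAlmostFG_iff_exists_fg_le {K : Submodule R M} :
    IsAlmostFG m K ↔ ∀ s ∈ m, ∃ N ≤ K, N.FG ∧ ∀ y ∈ K, s • y ∈ N := by
  refine forall₂_congr fun s _ => ⟨?_, ?_⟩
  · rintro ⟨n, f, hf⟩
    refine ⟨LinearMap.range (K.subtype ∘ₗ f), ?_, Module.Finite.iff_fg.1 inferInstance, ?_⟩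
    · rintro _ ⟨x, rfl⟩
      exact (f x).2
    · exact fun y hy => (hf ⟨y, hy⟩).imp fun x hx => congrArg Subtype.val hx
  · rintro ⟨N, hNK, hN, hsK⟩
    have := Module.Finite.iff_fg.2 hN
    obtain ⟨n, g, hg⟩ := Module.Finite.exists_fin' R N
    refine ⟨n, Submodule.inclusion hNK ∘ₗ g, fun y => ?_⟩
    obtain ⟨x, hx⟩ := hg ⟨s • y, hsK y y.2⟩
    exact ⟨x, congrArg (Submodule.inclusion hNK) hx⟩

lemma isAlmostFG_of_forall_mul (hm : m * m = m) {K : Submodule R M}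
    (h : ∀ s ∈ m, ∀ t ∈ m, ∃ N ≤ K, N.FG ∧ ∀ y ∈ K, (s * t) • y ∈ N) : IsAlmostFG m K := by
  refine isAlmostFG_iff_exists_fg_le.2 fun s hs => ?_
  rw [← hm] at hs
  refine Submodule.mul_induction_on hs h ?_
  rintro a b ⟨N, hNK, hN, haK⟩ ⟨L, hLK, hL, hbK⟩
  refine ⟨N ⊔ L, sup_le hNK hLK, hN.sup hL, fun y hy => ?_⟩
  rw [add_smul]
  exact Submodule.add_mem_sup (haK y hy) (hbK y hy)

lemma isAlmostFG_of_fg {K : Submodule R M} (hK : K.FG) : IsAlmostFG m K :=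
  isAlmostFG_iff_exists_fg_le.2 fun s _ => ⟨K, le_rfl, hK, fun _ => K.smul_mem s⟩

lemma IsAlmostFP.isAlmostFG_ker (hm : m * m = m) (hM : IsAlmostFP m M) {P : Type u}
    [AddCommGroup P] [Module R P] [Module.Finite R P] [Module.Projective R P] {p : P →ₗ[R] M}
    (hp : Function.Surjective p) : IsAlmostFG m (LinearMap.ker p) := by
  refine isAlmostFG_of_forall_mul hm fun s hs t ht => ?_
  obtain ⟨n, k, g, f, hfg, hsf, htg⟩ := hM s hs t ht
  obtain ⟨b, hb⟩ := Module.projective_lifting_property p f hp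
  obtain ⟨c, hc⟩ := Module.projective_lifting_property f.rangeRestrict
    ((s • p).codRestrict (LinearMap.range f) fun x => hsf (p x)) f.surjective_rangeRestrict
  have p_b (x) : p (b x) = f x := LinearMap.congr_fun hb x
  have f_c (x) : f (c x) = s • p x := congrArg Subtype.val (LinearMap.congr_fun hc x)
  -- Almost Schanuel: `b` and `c` compare the two presentations, and `d` measures the failure of
  -- `b ∘ c` to be multiplication by `s`.
  let d : P →ₗ[R] P := b ∘ₗ c - s • LinearMap.id
  refine ⟨LinearMap.range (b ∘ₗ g) ⊔ LinearMap.range d,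
    sup_le ?_ ?_, Submodule.FG.sup (Module.Finite.iff_fg.1 inferInstance)
      (Module.Finite.iff_fg.1 inferInstance), fun x hx => ?_⟩
  · rintro _ ⟨y, rfl⟩
    exact (p_b (g y)).trans (LinearMap.congr_fun hfg y)
  · rintro _ ⟨y, rfl⟩
    simp [d, p_b, f_c]
  · obtain ⟨y, hy⟩ := htg (c x) (by rw [LinearMap.mem_ker, f_c, hx, smul_zero])
    have decomposition : (s * t) • x = (b ∘ₗ g) y + d (-(t • x)) := by
      simp [d, hy, mul_smul, smul_comm s t]
    rw [decomposition]
    exact Submodule.add_mem_sup ⟨y, rfl⟩ ⟨_, rfl⟩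

lemma IsAlmostFG.inf_ker (hm : m * m = m) {K : Submodule R M} (hK : IsAlmostFG m K)
    {N : Type u} [AddCommGroup N] [Module R N]
    (hN : ∀ (n : ℕ) (h : (Fin n → R) →ₗ[R] N), IsAlmostFG m (LinearMap.ker h)) (g : M →ₗ[R] N) :
    IsAlmostFG m ↥(K ⊓ LinearMap.ker g) := by
  refine isAlmostFG_of_forall_mul hm fun t ht s hs => ?_
  obtain ⟨n, a, ha⟩ := hK s hs
  let a' := K.subtype ∘ₗ a
  obtain ⟨L, hLK, hL, htL⟩ := isAlmostFG_iff_exists_fg_le.1 (hN n (g ∘ₗ a')) t ht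
  refine ⟨L.map a', ?_, hL.map a', fun y hy => ?_⟩
  · rintro _ ⟨x, hx, rfl⟩
    exact ⟨(a x).2, hLK hx⟩
  · obtain ⟨x, hx⟩ := ha ⟨y, hy.1⟩
    replace hx : a' x = s • y := congrArg Subtype.val hx
    have hgx : g (a' x) = 0 := by rw [hx, map_smul, hy.2, smul_zero]
    exact ⟨t • x, htL x hgx, by rw [map_smul, hx, mul_smul]⟩

lemma IsAlmostFG.isAlmostFP (hM : IsAlmostFG m M)
    (h : ∀ (n : ℕ) (f : (Fin n → R) →ₗ[R] M), IsAlmostFG m (LinearMap.ker f)) :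
    IsAlmostFP m M := by
  intro s hs t ht
  obtain ⟨n, f, hf⟩ := hM s hs
  obtain ⟨k, g, hg⟩ := h n f t ht
  exact ⟨n, k, (LinearMap.ker f).subtype ∘ₗ g, f, LinearMap.ext fun y => (g y).2, hf,
    fun x hx => (hg ⟨x, hx⟩).imp fun y hy => congrArg Subtype.val hy⟩

lemma IsAlmostCoherent.isAlmostFG_ker (hR : IsAlmostCoherent m) (hm : m * m = m) {P : Type u}
    [AddCommGroup P] [Module R P] [Module.Finite R P] [Module.Projective R P] (f : P →ₗ[R] R) :
    IsAlmostFG m (LinearMap.ker f) := by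
  have range_fg : (LinearMap.range f).FG := Module.Finite.iff_fg.1 inferInstance
  rw [← f.ker_rangeRestrict]
  exact (hR _ (isAlmostFG_of_fg range_fg)).isAlmostFG_ker hm f.surjective_rangeRestrict

lemma isAlmostCoherent_of_forall_isAlmostFG_ker
    (h : ∀ (n : ℕ) (f : (Fin n → R) →ₗ[R] R), IsAlmostFG m (LinearMap.ker f)) :
    IsAlmostCoherent m := fun A hA => hA.isAlmostFP fun n f => by
  rw [← LinearMap.ker_comp_of_ker_eq_bot f A.ker_subtype]
  exact h n (A.subtype ∘ₗ f)

lemma IsAlmostCoherent.isAlmostFG_ker_pi (hR : IsAlmostCoherent m) (hm : m * m = m) {P : Type u}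
    [AddCommGroup P] [Module R P] [Module.Finite R P] [Module.Projective R P] {ι : Type*}
    [Finite ι] (f : P →ₗ[R] ι → R) : IsAlmostFG m (LinearMap.ker f) := by
  classical
  cases nonempty_fintype ι
  have isAlmostFG_inf (S : Finset ι) :
      IsAlmostFG m ↥(S.inf fun i => LinearMap.ker (LinearMap.proj i ∘ₗ f)) := by
    induction S using Finset.induction_on with
    | empty => exact isAlmostFG_of_fg Module.Finite.fg_top
    | insert i S _ ih =>
      rw [Finset.inf_insert, inf_comm]
      exact ih.inf_ker hm (fun _ h => hR.isAlmostFG_ker hm h) _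
  rw [← LinearMap.pi_proj_comp f, LinearMap.ker_pi, ← Finset.inf_univ_eq_iInf]
  exact isAlmostFG_inf _

end AlmostFinite

section CoherentImpliesHomFlat

variable {R : Type u} [CommRing R] {m : Ideal R} {E I : Type u} [AddCommGroup E] [Module R E]
  [AddCommGroup I] [Module R I]

lemma IsAlmostAbsolutelyPure.smul_mem_range_rTensor_hom (hE : IsAlmostAbsolutelyPure m E)
    (hI : Module.Injective R I) {L M N : Type u} [AddCommGroup L] [Module R L] [Module.Finite R L]
    [Module.Free R L] [AddCommGroup M] [Module R M] [Module.Finite R M] [Module.Free R M]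
    [AddCommGroup N] [Module R N] [Module.FinitePresentation R N] {g : L →ₗ[R] M} {f : M →ₗ[R] N}
    {s t : R} (hs : ∀ y ∈ LinearMap.ker f, s • y ∈ LinearMap.range g) (ht : t ∈ m)
    {x : M ⊗[R] (E →ₗ[R] I)} (hx : f.rTensor _ x = 0) :
    (t * s) • x ∈ LinearMap.range (g.rTensor (E →ₗ[R] I)) := by
  have ker_le : LinearMap.ker (LinearMap.lcomp R E g) ≤
      LinearMap.ker ((t * s) • tensorHomEval R M E I x) := by
    intro e he
    have ker_f_le : LinearMap.ker f ≤ LinearMap.ker (s • e) := fun y hy => by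
      obtain ⟨z, hz⟩ := hs y hy
      rw [LinearMap.mem_ker, LinearMap.smul_apply, ← map_smul, ← hz]
      exact LinearMap.congr_fun he z
    obtain ⟨e', he'⟩ := hE.exists_comp_eq_smul ker_f_le ht
    rw [LinearMap.mem_ker, LinearMap.smul_apply, ← map_smul, mul_smul, ← he',
      ← tensorHomEval_rTensor, hx, map_zero, LinearMap.zero_apply]
  obtain ⟨ψ, hψ⟩ := exists_comp_eq_of_injective_of_ker_le hI ker_le
  obtain ⟨u, rfl⟩ := tensorHomEval_bijective.2 ψ
  refine ⟨u, tensorHomEval_bijective.1 (LinearMap.ext fun e => ?_)⟩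
  rw [tensorHomEval_rTensor, map_smul, ← hψ]
  rfl

lemma IsAlmostCoherent.isAlmostFlat_hom (hR : IsAlmostCoherent m) (hm : m * m = m)
    (hE : IsAlmostAbsolutelyPure m E) (hI : Module.Injective R I) : IsAlmostFlat m (E →ₗ[R] I) := by
  refine isAlmostFlat_of_forall_smul_mem_range_rTensor_ker fun k l f x hx _ =>
    smul_mem_of_forall_mul_smul_mem hm fun t ht s hs => ?_
  obtain ⟨j, g, hg⟩ := hR.isAlmostFG_ker_pi hm f s hs
  obtain ⟨u, hu⟩ := hE.smul_mem_range_rTensor_hom hI (g := (LinearMap.ker f).subtype ∘ₗ g)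
    (fun y hy => (hg ⟨y, hy⟩).imp fun z hz => congrArg Subtype.val hz) ht hx
  exact ⟨g.rTensor _ u, by rw [← hu, LinearMap.rTensor_comp_apply]⟩

end CoherentImpliesHomFlat

section InjectiveCogenerator

variable {R : Type u} [CommRing R] {I : Type u} [AddCommGroup I] [Module R I]

lemma IsInjectiveCogenerator.mem_of_forall_apply_eq_zero (hI : IsInjectiveCogenerator R I)
    {M : Type u} [AddCommGroup M] [Module R M] {N : Submodule R M} {x : M}
    (h : ∀ e : M →ₗ[R] I, (∀ y ∈ N, e y = 0) → e x = 0) : x ∈ N := by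
  have := hI.1
  let T := Submodule.span R {N.mkQ x}
  have hom_eq_zero (φ : T →ₗ[R] I) : φ = 0 := by
    obtain ⟨φ', rfl⟩ := Module.Injective.extension_property R I _ _ T.subtype T.subtype_injective φ
    have φ'_x : φ' (N.mkQ x) = 0 := h (φ' ∘ₗ N.mkQ) fun y hy => by
      simp [(Submodule.Quotient.mk_eq_zero N).2 hy]
    ext ⟨y, hy⟩
    obtain ⟨r, rfl⟩ := Submodule.mem_span_singleton.1 hy
    simpa using congrArg (r • ·) φ'_x
  have := hI.2 T hom_eq_zero
  rw [← Submodule.Quotient.mk_eq_zero]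
  exact congrArg Subtype.val
    (Subsingleton.elim (⟨_, Submodule.mem_span_singleton_self _⟩ : T) 0)

lemma isInjectiveCogenerator_characterModule (R : Type u) [CommRing R] :
    IsInjectiveCogenerator R (CharacterModule R) := by
  refine ⟨Module.Flat.iff_characterModule_injective.1 inferInstance, fun T _ _ h => ?_⟩
  refine subsingleton_of_forall_eq 0 fun t => CharacterModule.eq_zero_of_character_apply fun c => ?_
  let φ := CharacterModule.curry (CharacterModule.dual (TensorProduct.rid R T).toLinearMap c)
  calc
    c t = φ t 1 := congrArg c ((TensorProduct.rid_tmul t 1).trans (one_smul R t)).symm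
    _ = 0 := by rw [h φ]; rfl

lemma exists_forall_pi_single_apply_eq {J V : Type*} [AddCommGroup V] [Module R V] [DecidableEq J]
    (hI : Module.Injective R I) (φ : J → V →ₗ[R] I) :
    ∃ Φ : (J → V) →ₗ[R] I, ∀ j v, Φ (Pi.single j v) = φ j v := by
  have ker_le : LinearMap.ker (Finsupp.lcoeFun (R := R) (α := J) (M := V)) ≤
      LinearMap.ker (Finsupp.lsum R φ) := fun v hv => by
    rw [show v = 0 from DFunLike.coe_injective hv]
    exact Submodule.zero_mem _
  obtain ⟨Φ, hΦ⟩ := exists_comp_eq_of_injective_of_ker_le hI ker_le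
  refine ⟨Φ, fun j v => ?_⟩
  simpa [Finsupp.single_eq_pi_single] using LinearMap.congr_fun hΦ (Finsupp.single j v)

lemma exists_simultaneous_evaluation (hI : Module.Injective R I) {M : Type*} [AddCommGroup M]
    [Module R M] (K : Submodule R M) :
    ∃ x : (M →ₗ[R] (K →₀ R) →ₗ[R] I) →ₗ[R] I,
      (∀ e, e ∘ₗ K.subtype = 0 → x e = 0) ∧
      ∀ (k : K) (e : M →ₗ[R] I), x (LinearMap.smulRightₗ (Finsupp.lapply k) ∘ₗ e) = e k := by
  classical
  obtain ⟨Φ, hΦ⟩ := exists_forall_pi_single_apply_eq hI fun k : K => LinearMap.applyₗ (M₂ := I) k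
  let coeff (k : K) : (M →ₗ[R] (K →₀ R) →ₗ[R] I) →ₗ[R] K →ₗ[R] I :=
    LinearMap.lcomp R I K.subtype ∘ₗ
      LinearMap.compRight R (LinearMap.applyₗ (Finsupp.single k 1))
  refine ⟨Φ ∘ₗ LinearMap.pi coeff, fun e he => ?_, fun k e => ?_⟩
  · have coeff_e : LinearMap.pi coeff e = 0 := by
      ext k y
      exact LinearMap.congr_fun (LinearMap.congr_fun he y) _
    rw [LinearMap.comp_apply, coeff_e, map_zero]
  · have coeff_e : LinearMap.pi coeff (LinearMap.smulRightₗ (Finsupp.lapply k) ∘ₗ e) =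
        Pi.single k (e ∘ₗ K.subtype) := by
      ext j y
      rcases eq_or_ne j k with rfl | hjk
      · simp [coeff]
      · simp [coeff, hjk]
    rw [LinearMap.comp_apply, coeff_e, hΦ]
    rfl

end InjectiveCogenerator

section HomHomFlatImpliesCoherent

variable {R : Type u} [CommRing R] {m : Ideal R} {I : Type u} [AddCommGroup I] [Module R I]

lemma isAlmostFG_ker_of_isAlmostFlat_hom_hom (hI : IsInjectiveCogenerator R I) {M N : Type u}
    [AddCommGroup M] [Module R M] [Module.Finite R M] [Module.Free R M] [AddCommGroup N]
    [Module R N] [Module.Finite R N] [Module.Free R N] (f : M →ₗ[R] N)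
    (hF : IsAlmostFlat m (((LinearMap.ker f →₀ R) →ₗ[R] I) →ₗ[R] I)) :
    IsAlmostFG m (LinearMap.ker f) := by
  refine isAlmostFG_iff_exists_fg_le.2 fun s hs => ?_
  obtain ⟨x, x_eq_zero, x_eval⟩ := exists_simultaneous_evaluation hI.1 (LinearMap.ker f)
  obtain ⟨w, rfl⟩ := tensorHomEval_bijective.2 x
  have rTensor_w : f.rTensor _ w = 0 := tensorHomEval_bijective.1 <| LinearMap.ext fun e => by
    rw [tensorHomEval_rTensor, map_zero]
    refine x_eq_zero _ ?_
    rw [LinearMap.comp_assoc, f.comp_ker_subtype, LinearMap.comp_zero]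
  obtain ⟨z, hz⟩ := hF.smul_mem_range_rTensor_ker hs rTensor_w
  obtain ⟨n, b, γ, rfl⟩ := TensorProduct.exists_sum_tmul_eq z
  refine ⟨Submodule.span R (Set.range fun i => (b i : M)), ?_,
    Submodule.fg_span (Set.finite_range _), ?_⟩
  · rw [Submodule.span_le]
    rintro _ ⟨i, rfl⟩
    exact (b i).2
  · refine fun y hy => hI.mem_of_forall_apply_eq_zero fun e he => ?_
    have e_b (i) : e (b i) = 0 := he _ (Submodule.subset_span ⟨i, rfl⟩)
    rw [map_smul, ← x_eval ⟨y, hy⟩ e, ← LinearMap.smul_apply, ← map_smul, ← hz]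
    simp [e_b]

lemma isAlmostCoherent_of_isAlmostFlat_hom_hom (hI : IsInjectiveCogenerator R I)
    (h : ∀ J : Type u, IsAlmostFlat m (((J →₀ R) →ₗ[R] I) →ₗ[R] I)) : IsAlmostCoherent m :=
  isAlmostCoherent_of_forall_isAlmostFG_ker fun _ f =>
    isAlmostFG_ker_of_isAlmostFlat_hom_hom hI f (h _)

end HomHomFlatImpliesCoherent

/-- Characterizations of almost coherent rings via `Hom` modules. -/
theorem almostCoherent_iff_hom_almostFlat
    {R : Type u} [CommRing R] (m : Ideal R) (hm : m * m = m) :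
    -- (1) ↔ (2)
    ((IsAlmostCoherent m ↔
      (∀ (E : Type u) [AddCommGroup E] [Module R E], IsAlmostAbsolutelyPure m E →
        ∀ (I : Type u) [AddCommGroup I] [Module R I], Module.Injective R I →
          IsAlmostFlat m (E →ₗ[R] I))) ∧
    -- (1) ↔ (3)
    (IsAlmostCoherent m ↔
      (∀ (I : Type u) [AddCommGroup I] [Module R I], IsInjectiveCogenerator R I →
        ∀ (E : Type u) [AddCommGroup E] [Module R E], IsAlmostAbsolutelyPure m E →
          IsAlmostFlat m (E →ₗ[R] I))) ∧
    -- (1) ↔ (4)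
    (IsAlmostCoherent m ↔
      (∀ (F : Type u) [AddCommGroup F] [Module R F], IsAlmostFlat m F →
        ∀ (I₁ I₂ : Type u) [AddCommGroup I₁] [Module R I₁] [AddCommGroup I₂] [Module R I₂],
          Module.Injective R I₁ → Module.Injective R I₂ →
            IsAlmostFlat m ((F →ₗ[R] I₁) →ₗ[R] I₂))) ∧
    -- (1) ↔ (5)
    (IsAlmostCoherent m ↔
      (∀ (I₁ I₂ : Type u) [AddCommGroup I₁] [Module R I₁] [AddCommGroup I₂] [Module R I₂],
        IsInjectiveCogenerator R I₁ → IsInjectiveCogenerator R I₂ →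
          ∀ (F : Type u) [AddCommGroup F] [Module R F], IsAlmostFlat m F →
            IsAlmostFlat m ((F →ₗ[R] I₁) →ₗ[R] I₂)))) := by
  have hC := isInjectiveCogenerator_characterModule R
  have free_flat (J : Type u) : IsAlmostFlat m (J →₀ R) := isAlmostFlat_of_flat
  have dual_pure (J : Type u) := (free_flat J).isAlmostAbsolutelyPure_hom hC.1
  have coherent := isAlmostCoherent_of_isAlmostFlat_hom_hom (m := m) hC
  refine ⟨⟨?_, ?_⟩, ⟨?_, ?_⟩, ⟨?_, ?_⟩, ⟨?_, ?_⟩⟩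
  · exact fun hR E _ _ hE I _ _ hI => hR.isAlmostFlat_hom hm hE hI
  · exact fun h => coherent fun J => h _ (dual_pure J) _ hC.1
  · exact fun hR I _ _ hI E _ _ hE => hR.isAlmostFlat_hom hm hE hI.1
  · exact fun h => coherent fun J => h _ hC _ (dual_pure J)
  · exact fun hR F _ _ hF I₁ I₂ _ _ _ _ h₁ h₂ =>
      hR.isAlmostFlat_hom hm (hF.isAlmostAbsolutelyPure_hom h₁) h₂
  · exact fun h => coherent fun J => h _ (free_flat J) _ _ hC.1 hC.1
  · exact fun hR I₁ I₂ _ _ _ _ h₁ h₂ F _ _ hF =>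
      hR.isAlmostFlat_hom hm (hF.isAlmostAbsolutelyPure_hom h₁.1) h₂.1
  · exact fun h => coherent fun J => h _ _ hC hC _ (free_flat J)
end

section
/- Let R₁ be a coherent commutative ring and R₂ a commutative ring that is not coherent. Let R = R₁ × R₂ and m = R₁ × {0} ⊆ R. Then m is an ideal of R with m² = m, the ring R is almost coherent with respect to m, and R is not coherent. -/
universe u

/-- A commutative ring `S` is coherent if every finitely generated ideal of `S` is
finitely presented as an `S`-module. -/
def IsCoherentRing (S : Type u) [CommRing S] : Prop :=
  ∀ I : Ideal S, I.FG → Module.FinitePresentation S I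

/-!
The ideal `m = R₁ × {0}` is generated by an idempotent, so `m * I` is finitely generated whenever
the ideal `I` is almost finitely generated, and `I` is almost finitely presented as soon as `m * I`
is finitely presented. The projection to `R₁` is injective on `m`, hence identifies `m * I` with a
finitely generated ideal of `R₁`, to which coherence applies. On the other hand `R₂` is the quotient
of `R₁ × R₂` by a finitely generated ideal, and such quotients inherit coherence.
-/

section ProdIdeal

variable {R S : Type*} [CommRing R] [CommRing S]

theorem ideal_prod_mul_prod (I I' : Ideal R) (J J' : Ideal S) :
    Ideal.prod I J * Ideal.prod I' J' = Ideal.prod (I * I') (J * J') := by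
  rw [Ideal.ideal_prod_eq (Ideal.prod I J * Ideal.prod I' J')]
  simp only [Ideal.map_mul, Ideal.map_fst_prod, Ideal.map_snd_prod]

theorem ideal_prod_fg {I : Ideal R} {J : Ideal S} (hI : I.FG) (hJ : J.FG) :
    (Ideal.prod I J).FG := by
  obtain ⟨s, hs, rfl⟩ := Submodule.fg_def.mp hI
  obtain ⟨t, ht, rfl⟩ := Submodule.fg_def.mp hJ
  refine Submodule.fg_def.mpr ⟨insert 0 s ×ˢ insert 0 t, (hs.insert 0).prod (ht.insert 0), ?_⟩
  simpa only [Submodule.span_insert_zero] using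
    Ideal.span_prod (s := insert 0 s) (t := insert 0 t) (by simp)

theorem ker_ringHom_fst : RingHom.ker (RingHom.fst R S) = Ideal.prod ⊥ ⊤ := by
  ext; simp [Ideal.mem_prod, RingHom.mem_ker]

theorem ker_ringHom_snd : RingHom.ker (RingHom.snd R S) = Ideal.prod ⊤ ⊥ := by
  ext; simp [Ideal.mem_prod, RingHom.mem_ker]

theorem disjoint_prod_bot_ker_fst (I : Ideal R) :
    Disjoint (Ideal.prod I (⊥ : Ideal S)) (RingHom.ker (RingHom.fst R S)) := by
  rw [Submodule.disjoint_def]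
  exact fun _ hx hker => Prod.ext hker hx.2

end ProdIdeal

section Algebra

variable {R S : Type*} [CommRing R] [CommRing S] [Algebra R S]

variable (R) in
theorem finitePresentation_of_restrictScalars {M : Type*} [AddCommGroup M] [Module R M]
    [Module S M] [IsScalarTower R S M] [Module.Finite R S] [Module.FinitePresentation R M] :
    Module.FinitePresentation S M := by
  have : Module.Finite S M := Module.Finite.of_restrictScalars_finite R S M
  obtain ⟨n, f, hf⟩ := Module.Finite.exists_fin' S M
  have hker : (LinearMap.ker (f.restrictScalars R)).FG :=
    Module.FinitePresentation.fg_ker (f.restrictScalars R) hf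
  exact Module.finitePresentation_of_surjective f hf (.of_restrictScalars R hker)

theorem idealMap_surjective (hsurj : Function.Surjective (algebraMap R S)) (I : Ideal R) :
    Function.Surjective (Algebra.idealMap S I) := by
  rintro ⟨y, hy⟩
  obtain ⟨x, hx, rfl⟩ := (Ideal.mem_map_iff_of_surjective _ hsurj).mp hy
  exact ⟨⟨x, hx⟩, rfl⟩

theorem map_subtype_ker_idealMap (I : Ideal R) :
    (LinearMap.ker (Algebra.idealMap S I)).map I.subtype = I ⊓ RingHom.ker (algebraMap R S) := by
  have hker : LinearMap.ker (Algebra.idealMap S I) =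
      Submodule.comap I.subtype (RingHom.ker (algebraMap R S)) :=
    Submodule.ext fun _ => Subtype.ext_iff
  rw [hker, Submodule.map_comap_subtype]

theorem fg_comap_of_surjective_algebraMap (hsurj : Function.Surjective (algebraMap R S))
    (hker : (RingHom.ker (algebraMap R S)).FG) {J : Ideal S} (hJ : J.FG) :
    (J.comap (algebraMap R S)).FG := by
  refine Submodule.fg_of_fg_map_of_fg_inf_ker (Algebra.linearMap R S) ?_ ?_
  · have hmap : Submodule.map (Algebra.linearMap R S) (J.comap (algebraMap R S)) =
        J.restrictScalars R :=
      Submodule.map_comap_eq_of_surjective (f := Algebra.linearMap R S) hsurj (J.restrictScalars R)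
    exact hmap ▸ Submodule.FG.restrictScalars_of_surjective hJ hsurj
  · have hinf : J.comap (algebraMap R S) ⊓ RingHom.ker (algebraMap R S) =
        RingHom.ker (algebraMap R S) := inf_eq_right.mpr (Ideal.ker_le_comap _)
    exact hinf ▸ hker

theorem finitePresentation_map_of_fg_inf_ker
    (hsurj : Function.Surjective (algebraMap R S)) {I : Ideal R}
    (hker : (I ⊓ RingHom.ker (algebraMap R S)).FG) [Module.FinitePresentation R I] :
    Module.FinitePresentation S (I.map (algebraMap R S)) := by
  have : Module.Finite R S := Module.Finite.of_surjective (Algebra.linearMap R S) hsurj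
  have hker_idealMap : (LinearMap.ker (Algebra.idealMap S I)).FG :=
    Submodule.fg_of_fg_map_injective I.subtype I.subtype_injective
      (map_subtype_ker_idealMap (S := S) I ▸ hker)
  have : Module.FinitePresentation R (I.map (algebraMap R S)) :=
    Module.finitePresentation_of_surjective _ (idealMap_surjective hsurj I) hker_idealMap
  exact finitePresentation_of_restrictScalars R

theorem finitePresentation_of_map_of_disjoint_ker (hsurj : Function.Surjective (algebraMap R S))
    (hker : (RingHom.ker (algebraMap R S)).FG) {I : Ideal R}
    (hI : Disjoint I (RingHom.ker (algebraMap R S)))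
    [Module.FinitePresentation S (I.map (algebraMap R S))] : Module.FinitePresentation R I := by
  have : Module.FinitePresentation R S :=
    Module.finitePresentation_of_surjective (Algebra.linearMap R S) hsurj hker
  have : Module.FinitePresentation R (I.map (algebraMap R S)) :=
    Module.FinitePresentation.trans R _ S
  have hinj : Function.Injective (Algebra.idealMap S I) := by
    rw [← LinearMap.ker_eq_bot, ← (Submodule.map_injective_of_injective I.subtype_injective).eq_iff,
      map_subtype_ker_idealMap, hI.eq_bot, Submodule.map_bot]
  exact .of_equiv (LinearEquiv.ofBijective _ ⟨hinj, idealMap_surjective hsurj I⟩).symm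

end Algebra

theorem IsCoherentRing.of_surjective {R S : Type u} [CommRing R] [CommRing S]
    (hR : IsCoherentRing R) {f : R →+* S} (hsurj : Function.Surjective f)
    (hker : (RingHom.ker f).FG) : IsCoherentRing S := by
  algebraize [f]
  intro J hJ
  have : Module.FinitePresentation R (J.comap f) :=
    hR _ (fg_comap_of_surjective_algebraMap hsurj hker hJ)
  have hinf : (J.comap f ⊓ RingHom.ker f).FG := by
    rwa [inf_eq_right.mpr (Ideal.ker_le_comap f)]
  rw [← Ideal.map_comap_of_surjective f hsurj J]
  exact finitePresentation_map_of_fg_inf_ker hsurj hinf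

section Almost

variable {R : Type u} [CommRing R] {m : Ideal R} {M : Type u} [AddCommGroup M] [Module R M]

theorem IsAlmostFG.fg_smul_top (hidem : IsIdempotentElem m) (hm : m.FG) (hM : IsAlmostFG m M) :
    (m • (⊤ : Submodule R M)).FG := by
  obtain ⟨e, -, hme⟩ := (Ideal.isIdempotentElem_iff_of_fg m hm).mp hidem
  obtain ⟨n, f, hf⟩ := hM e (hme ▸ Ideal.mem_span_singleton_self e)
  have hle : m • (⊤ : Submodule R M) ≤ LinearMap.range f := by
    rw [hme, Submodule.ideal_span_singleton_smul]
    rintro _ ⟨y, -, rfl⟩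
    exact hf y
  have hrange : m • (⊤ : Submodule R M) = m • LinearMap.range f := by
    refine le_antisymm ?_ (smul_mono_right _ le_top)
    calc m • (⊤ : Submodule R M)
        = m • m • (⊤ : Submodule R M) := by rw [← Submodule.mul_smul, hidem.eq]
      _ ≤ m • LinearMap.range f := smul_mono_right _ hle
  rw [hrange]
  exact Submodule.FG.smul hm (Module.Finite.iff_fg.mp inferInstance)

theorem IsAlmostFP.of_finitePresentation_smul_top
    [Module.FinitePresentation R ↥(m • (⊤ : Submodule R M))] : IsAlmostFP m M := by
  intro s hs t _
  obtain ⟨n, k, f, g, hsurj, hexact⟩ :=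
    Module.FinitePresentation.exists_fin' R ↥(m • (⊤ : Submodule R M))
  refine ⟨n, k, g, (m • (⊤ : Submodule R M)).subtype ∘ₗ f, ?_, fun y => ?_, fun x hx => ?_⟩
  · rw [LinearMap.comp_assoc, hexact.linearMap_comp_eq_zero, LinearMap.comp_zero]
  · obtain ⟨x, hx⟩ := hsurj ⟨s • y, Submodule.smul_mem_smul hs Submodule.mem_top⟩
    exact ⟨x, congrArg Subtype.val hx⟩
  · have hfx : f x = 0 := Subtype.ext hx
    exact Submodule.smul_mem _ t ((hexact x).mp hfx)

/-- The ring `R` is almost coherent with respect to the ideal `m` if almost finitely generated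
ideals are almost finitely presented. The idempotence of `m` is not built into this predicate. -/
def IsAlmostCoherentRing (m : Ideal R) : Prop :=
  ∀ I : Ideal R, IsAlmostFG m I → IsAlmostFP m I

theorem IsCoherentRing.isAlmostCoherentRing_of_disjoint_ker {S : Type u} [CommRing S]
    (hS : IsCoherentRing S) {f : R →+* S} (hsurj : Function.Surjective f)
    (hker : (RingHom.ker f).FG) (hidem : IsIdempotentElem m) (hm : m.FG)
    (hdisj : Disjoint m (RingHom.ker f)) : IsAlmostCoherentRing m := by
  algebraize [f]
  intro I hI
  have hmap : (m • (⊤ : Submodule R I)).map I.subtype = m * I := by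
    rw [Submodule.map_smul'', Submodule.map_subtype_top, smul_eq_mul]
  have hfg : (m * I).FG := hmap ▸ (hI.fg_smul_top hidem hm).map I.subtype
  have : Module.FinitePresentation S ((m * I).map f) := hS _ (hfg.map f)
  have : Module.FinitePresentation R ↥(m * I) :=
    finitePresentation_of_map_of_disjoint_ker hsurj hker (hdisj.mono_left Ideal.mul_le_left)
  have : Module.FinitePresentation R ↥(m • (⊤ : Submodule R I)) :=
    .of_equiv (I.equivSubtypeMap _ ≪≫ₗ LinearEquiv.ofEq _ _ hmap).symm
  exact .of_finitePresentation_smul_top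

end Almost

/-- If `R₁` is coherent and `R₂` is not coherent, then
`R = R₁ × R₂` with `m = R₁ × {0}` is an almost coherent ring (with respect to `m`)
which is not coherent, and `m² = m`. -/
theorem prod_almostCoherent_not_coherent
    (R₁ R₂ : Type u) [CommRing R₁] [CommRing R₂]
    (h₁ : IsCoherentRing R₁) (h₂ : ¬ IsCoherentRing R₂) :
    (Ideal.prod (⊤ : Ideal R₁) (⊥ : Ideal R₂)) * (Ideal.prod (⊤ : Ideal R₁) (⊥ : Ideal R₂)) =
        Ideal.prod (⊤ : Ideal R₁) (⊥ : Ideal R₂) ∧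
    (∀ I : Ideal (R₁ × R₂),
      IsAlmostFG (Ideal.prod (⊤ : Ideal R₁) (⊥ : Ideal R₂)) I →
        IsAlmostFP (Ideal.prod (⊤ : Ideal R₁) (⊥ : Ideal R₂)) I) ∧
    ¬ IsCoherentRing (R₁ × R₂) := by
  have hidem : IsIdempotentElem (Ideal.prod (⊤ : Ideal R₁) (⊥ : Ideal R₂)) := by
    rw [IsIdempotentElem, ideal_prod_mul_prod, Ideal.mul_top, Ideal.mul_bot]
  have hm : (Ideal.prod (⊤ : Ideal R₁) (⊥ : Ideal R₂)).FG :=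
    ideal_prod_fg Module.Finite.fg_top Submodule.fg_bot
  have hker_fst : (RingHom.ker (RingHom.fst R₁ R₂)).FG := by
    rw [ker_ringHom_fst]
    exact ideal_prod_fg Submodule.fg_bot Module.Finite.fg_top
  have hker_snd : (RingHom.ker (RingHom.snd R₁ R₂)).FG := by rwa [ker_ringHom_snd]
  refine ⟨hidem, ?_, fun h => h₂ (h.of_surjective Prod.snd_surjective hker_snd)⟩
  exact h₁.isAlmostCoherentRing_of_disjoint_ker Prod.fst_surjective hker_fst hidem hm
    (disjoint_prod_bot_ker_fst ⊤)
end
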